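/- There exists η₀ > 0 (depending on γ) such that for every 0 < η ≤ η₀ there exist constants C', W₀ > 0 (depending on η, C, c, γ) with the following property: for all W ≥ W₀ and all x, y ∈ ℝ with |x − y| ≤ W^{−1+η}, Re U(x) ≤ W^η and Re U(y) ≤ W^η, the kernel (K*K)(x,y) = ∫_ℝ conj(K(r,x))·K(r,y) dr satisfies (K*K)(x,y) = (1 + R(x,y)) · √(π/(2W²·Re ζ²)) · exp( −(conj(U(x)) + U(y))/2 − Re U((x+y)/2) − (W²/(2·Re ζ²))·(x−y)² ), with |R(x,y)| ≤ C'·W^{−1+5ηγ}. -/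

import Mathlib

open MeasureTheory Complex Real
open scoped ComplexInnerProductSpace

noncomputable section

/-- The Hilbert space `L²(ℝ, ℂ)`. -/
abbrev Hsp : Type := Lp ℂ 2 (volume : Measure ℝ)

/-- The kernel `K(x,y) = exp(−W²ζ²(x−y)² − U(x)/2 − U(y)/2)`. -/
def kerK (W : ℝ) (ζ : ℂ) (U : ℝ → ℂ) (x y : ℝ) : ℂ :=
  Complex.exp (-(W : ℂ)^2 * ζ^2 * ((x : ℂ) - (y : ℂ))^2 - U x / 2 - U y / 2)

/-- The harmonic-approximation kernel `K̃(x,y) = exp(−W²ζ²(x−y)² − (U''(0)/4)(x²+y²))`. -/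
def kerKt (W : ℝ) (ζ : ℂ) (U : ℝ → ℂ) (x y : ℝ) : ℂ :=
  Complex.exp (-(W : ℂ)^2 * ζ^2 * ((x : ℂ) - (y : ℂ))^2
    - (deriv (deriv U) 0 / 4) * ((x : ℂ)^2 + (y : ℂ)^2))

/-- `α = W·√(ζ²U''(0)/2)`, a positive real by assumption (U2). -/
def alph (W : ℝ) (ζ : ℂ) (U : ℝ → ℂ) : ℝ :=
  W * Real.sqrt ((ζ^2 * deriv (deriv U) 0).re / 2)

/-- `μ = √(π/(W²ζ² + α))`, principal branch. -/
def muK (W : ℝ) (ζ : ℂ) (U : ℝ → ℂ) : ℂ :=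
  ((π : ℂ) / ((W : ℂ)^2 * ζ^2 + (alph W ζ U : ℂ))) ^ (1/2 : ℂ)

/-- The Gaussian `g_α(x) = (2α/π)^{1/4}·exp(−αx²)` (for real `α > 0`, a unit vector). -/
def gaussF (α : ℝ) (x : ℝ) : ℂ :=
  (((2*α/π) ^ (1/4 : ℝ) : ℝ) : ℂ) * Complex.exp (-(α : ℂ) * (x : ℂ)^2)

/-- `T` is the integral operator on `L²(ℝ)` with kernel `k`. -/
def IsKerOp (k : ℝ → ℝ → ℂ) (T : Hsp →L[ℂ] Hsp) : Prop :=
  ∀ f : Hsp, ∀ᵐ x : ℝ, (T f : ℝ → ℂ) x = ∫ y : ℝ, k x y * (f : ℝ → ℂ) y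

/-- The orthogonal projection of `L²(ℝ)` onto the orthogonal complement of the
unit vector `g`: `P u = u − ⟪g, u⟫·g`. -/
def projP (g : Hsp) : Hsp →L[ℂ] Hsp :=
  ContinuousLinearMap.id ℂ Hsp - (innerSL ℂ g).smulRight g

/-- Assumptions (U1)–(U4) on the potential `U`, together with the conditions on `ζ`. -/
structure UHyp (C c γ : ℝ) (ζ : ℂ) (U : ℝ → ℂ) : Prop where
  hζ : ‖ζ‖ = 1
  hζre : 0 < (ζ^2).re
  hU1smooth : ContDiff ℝ (⊤ : ℕ∞) U
  hU1zero : U 0 = 0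
  hU1deriv : deriv U 0 = 0
  hU2im : (ζ^2 * deriv (deriv U) 0).im = 0
  hU2pos : 0 < (ζ^2 * deriv (deriv U) 0).re
  hU3 : ∀ x : ℝ, (1/C) * min 1 (x^2) ≤ (U x).re
  hU4 : ∃ UC : ℂ → ℂ, (∀ x : ℝ, UC x = U x) ∧
      AnalyticOnNhd ℂ UC {z : ℂ | |z.im| ≤ c} ∧
      ∀ z : ℂ, |z.im| ≤ c → ‖deriv UC z‖ ≤ C * (max 1 (UC z).re) ^ γ

end

/-!
With `m = (x + y) / 2` and `r = m + s`, completing the square in the exponent of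
`conj K(r,x) · K(r,y)` produces the claimed exponential factor times the integral over `s ∈ ℝ` of
`exp (-D (s + iβ)² - (Re U(m + s) - Re U(m)))`, where `D = 2 W² Re ζ²` and
`β = (Im ζ² / Re ζ²) (x - y) / 2`. The restriction of `Re U` to the real line continues
analytically to `z ↦ (U(z) + conj U(conj z)) / 2`, so on a rectangle of size `L ≈ W^(-1 + η)` the
line `ℝ + iβ` may be moved back to `ℝ`. There `Re U` varies by at most `C (4 W^η)^γ · 2 L`, because
the bound on `U'` cannot let `Re U` more than double over such a distance, and the integral is
`√(π / D)` up to this relative error. Outside the rectangle the Gaussian is of size `exp (-W^η)`.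
For constants uniform in `ζ`, `Re ζ²` has to be bounded below: this follows from
`Re U''(0) = ζ² U''(0) · Re ζ²`.
-/

section ShiftedGaussian

open Set Metric

variable {E : Type*} [NormedAddCommGroup E] [NormedSpace ℂ E] {D β L δ M : ℝ}

theorem norm_cexp_neg_mul_add_mul_I_sq (D β s : ℝ) :
    ‖cexp (-(D : ℂ) * (s + β * I) ^ 2)‖ = rexp (D * β ^ 2 - D * s ^ 2) := by
  rw [GaussianFourier.norm_cexp_neg_mul_sq_add_mul_I]
  simp

theorem abs_mul_exp_neg_mul_sq_le_sqrt_pi_div (hD : 0 < D) (β : ℝ) :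
    |β| * rexp (-(D * β ^ 2)) ≤ √(π / D) := by
  have hexp_le_one : rexp (-(D * β ^ 2)) ≤ 1 := Real.exp_le_one_iff.2 (neg_nonpos.2 (by positivity))
  have hmul_exp_le_one : D * β ^ 2 * rexp (-(D * β ^ 2)) ≤ 1 :=
    (Real.mul_exp_neg_le_exp_neg_one _).trans (Real.exp_le_one_iff.2 (by norm_num))
  refine Real.le_sqrt_of_sq_le ?_
  calc (|β| * rexp (-(D * β ^ 2))) ^ 2
      = D * β ^ 2 * rexp (-(D * β ^ 2)) * rexp (-(D * β ^ 2)) / D := by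
        rw [mul_pow, sq_abs]
        field_simp
    _ ≤ 1 * 1 / D := by gcongr
    _ ≤ π / D := by
        gcongr
        linarith [Real.pi_gt_three]

theorem norm_intervalIntegral_gaussian_smul_le {a b : ℝ} (hD : 0 < D) (hab : a ≤ b) {h : ℝ → E}
    (hh : ∀ s ∈ Icc a b, ‖h s‖ ≤ δ) :
    ‖∫ s in a..b, cexp (-(D : ℂ) * (s : ℂ) ^ 2) • h s‖ ≤ δ * √(π / D) := by
  have hδ : 0 ≤ δ := (norm_nonneg _).trans (hh a (left_mem_Icc.2 hab))
  have hint : Integrable fun s : ℝ => δ * rexp (-D * s ^ 2) :=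
    (integrable_exp_neg_mul_sq hD).const_mul δ
  calc ‖∫ s in a..b, cexp (-(D : ℂ) * (s : ℂ) ^ 2) • h s‖
      ≤ ∫ s in a..b, δ * rexp (-D * s ^ 2) := by
        refine intervalIntegral.norm_integral_le_of_norm_le hab
          (Filter.Eventually.of_forall fun s hs => ?_) hint.intervalIntegrable
        have hnorm := norm_cexp_neg_mul_add_mul_I_sq D 0 s
        simp only [ofReal_zero, zero_mul, add_zero] at hnorm
        rw [norm_smul, hnorm, mul_comm]
        gcongr
        · exact hh s (Ioc_subset_Icc_self hs)
        · linarith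
    _ ≤ ∫ s, δ * rexp (-D * s ^ 2) := by
        rw [intervalIntegral.integral_of_le hab]
        exact setIntegral_le_integral hint (Filter.Eventually.of_forall fun s => by positivity)
    _ = δ * √(π / D) := by rw [integral_const_mul, integral_gaussian]

theorem norm_intervalIntegral_vertical_gaussian_smul_le {x : ℝ} (hD : 0 < D)
    (hβ : 2 * β ^ 2 ≤ x ^ 2) {h : ℝ → E} (hh : ∀ t ∈ uIcc 0 β, ‖h t‖ ≤ δ) :
    ‖∫ t in (0 : ℝ)..β, cexp (-(D : ℂ) * (x + t * I) ^ 2) • h t‖ ≤ δ * √(π / D) := by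
  have hδ : 0 ≤ δ := (norm_nonneg _).trans (hh 0 left_mem_uIcc)
  calc ‖∫ t in (0 : ℝ)..β, cexp (-(D : ℂ) * (x + t * I) ^ 2) • h t‖
      ≤ rexp (-(D * β ^ 2)) * δ * |β - 0| := by
        refine intervalIntegral.norm_integral_le_of_norm_le_const fun t ht => ?_
        have ht' := uIoc_subset_uIcc ht
        have htβ : t ^ 2 ≤ β ^ 2 := sq_le_sq.2 (by simpa using abs_sub_left_of_mem_uIcc ht')
        rw [norm_smul, norm_cexp_neg_mul_add_mul_I_sq]
        gcongr
        · nlinarith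
        · exact hh t ht'
    _ = δ * (|β| * rexp (-(D * β ^ 2))) := by
        rw [sub_zero]
        ring
    _ ≤ δ * √(π / D) := by
        gcongr
        exact abs_mul_exp_neg_mul_sq_le_sqrt_pi_div hD β

theorem intervalIntegral_add_mul_I_eq {a b : ℝ} {F : ℂ → E}
    (hF : DifferentiableOn ℂ F (uIcc a b ×ℂ uIcc 0 β)) :
    ∫ s in a..b, F (s + β * I) =
      (∫ s in a..b, F s) + I • (∫ t in (0 : ℝ)..β, F (b + t * I)) -
        I • ∫ t in (0 : ℝ)..β, F (a + t * I) := by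
  have hrect := integral_boundary_rect_eq_zero_of_differentiableOn F ⟨a, 0⟩ ⟨b, β⟩ hF
  simp only [ofReal_zero, zero_mul, add_zero] at hrect
  rw [← sub_eq_zero, ← neg_eq_zero, ← hrect]
  abel

theorem norm_intervalIntegral_shifted_gaussian_smul_le (hD : 0 < D) (hL : 0 ≤ L)
    (hβ : 2 * β ^ 2 ≤ L ^ 2) {H : ℂ → E}
    (hd : DifferentiableOn ℂ H (uIcc (-L) L ×ℂ uIcc 0 β))
    (hH : ∀ z ∈ uIcc (-L) L ×ℂ uIcc 0 β, ‖H z‖ ≤ δ) :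
    ‖∫ s in (-L)..L, cexp (-(D : ℂ) * (s + β * I) ^ 2) • H (s + β * I)‖
      ≤ 3 * δ * √(π / D) := by
  have hHδ : ∀ s ∈ uIcc (-L) L, ∀ t ∈ uIcc 0 β, ‖H (s + t * I)‖ ≤ δ := fun s hs t ht =>
    hH _ (by simpa [mem_reProdIm] using And.intro hs ht)
  have hshift := intervalIntegral_add_mul_I_eq (F := fun z => cexp (-(D : ℂ) * z ^ 2) • H z)
    ((by fun_prop : Differentiable ℂ fun z : ℂ => cexp (-(D : ℂ) * z ^ 2)).differentiableOn.smul
      hd)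
  have hbottom := norm_intervalIntegral_gaussian_smul_le (h := fun s => H s) hD
    (neg_le_self hL) fun s hs => by
      simpa using hHδ s (by rwa [uIcc_of_le (neg_le_self hL)]) 0 left_mem_uIcc
  have hright := norm_intervalIntegral_vertical_gaussian_smul_le hD hβ
    (hHδ L right_mem_uIcc)
  have hleft := norm_intervalIntegral_vertical_gaussian_smul_le hD (by rwa [neg_sq])
    (hHδ (-L) left_mem_uIcc)
  rw [hshift]
  refine (norm_sub_le _ _).trans ((add_le_add_left (norm_add_le _ _) _).trans ?_)
  rw [norm_smul, norm_smul, norm_I]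
  linarith

theorem norm_setIntegral_compl_shifted_gaussian_smul_le (hD : 0 < D) (hL : 0 ≤ L) {k : ℝ → E}
    (hk : ∀ s, ‖k s‖ ≤ M) :
    ‖∫ s in (Icc (-L) L)ᶜ, cexp (-(D : ℂ) * (s + β * I) ^ 2) • k s‖
      ≤ 2 * M * rexp (D * β ^ 2 - D * L ^ 2 / 2) * √(π / D) := by
  have hM : 0 ≤ M := (norm_nonneg _).trans (hk 0)
  set B := M * rexp (D * β ^ 2 - D * L ^ 2 / 2)
  have hint : Integrable fun s : ℝ => B * rexp (-(D / 2) * s ^ 2) :=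
    (integrable_exp_neg_mul_sq (half_pos hD)).const_mul _
  have hbound : ∀ s ∈ (Icc (-L) L)ᶜ,
      ‖cexp (-(D : ℂ) * (s + β * I) ^ 2) • k s‖ ≤ B * rexp (-(D / 2) * s ^ 2) := by
    intro s hs
    have hLs : L ^ 2 ≤ s ^ 2 := by
      rw [mem_compl_iff, mem_Icc, ← abs_le, not_le] at hs
      exact sq_le_sq.2 (by rw [abs_of_nonneg hL]; exact hs.le)
    rw [norm_smul, norm_cexp_neg_mul_add_mul_I_sq, mul_comm, mul_assoc, ← Real.exp_add]
    gcongr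
    · exact hk s
    · nlinarith
  calc ‖∫ s in (Icc (-L) L)ᶜ, cexp (-(D : ℂ) * (s + β * I) ^ 2) • k s‖
      ≤ ∫ s in (Icc (-L) L)ᶜ, B * rexp (-(D / 2) * s ^ 2) :=
        norm_integral_le_of_norm_le hint.integrableOn
          ((ae_restrict_iff' measurableSet_Icc.compl).2 (Filter.Eventually.of_forall hbound))
    _ ≤ ∫ s, B * rexp (-(D / 2) * s ^ 2) :=
        setIntegral_le_integral hint (Filter.Eventually.of_forall fun s => by positivity)
    _ = B * √(4 * (π / D) / 2) := by
        rw [integral_const_mul, integral_gaussian]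
        congr 2
        field_simp
        norm_num
    _ ≤ B * √(2 ^ 2 * (π / D)) := by
        gcongr
        have : 0 ≤ π / D := by positivity
        linarith
    _ = 2 * M * rexp (D * β ^ 2 - D * L ^ 2 / 2) * √(π / D) := by
        rw [Real.sqrt_mul (by norm_num), Real.sqrt_sq zero_le_two]
        ring

theorem integral_shifted_gaussian (hD : 0 < D) (β : ℝ) :
    ∫ s : ℝ, cexp (-(D : ℂ) * (s + β * I) ^ 2) = (√(π / D) : ℂ) := by
  rw [GaussianFourier.integral_cexp_neg_mul_sq_add_real_mul_I (by simpa), Real.sqrt_eq_rpow,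
    ofReal_cpow (by positivity)]
  push_cast
  rfl

/- The bound `|exp (-D (s + iβ)²)| = exp (D β² - D s²)` loses `exp (D β²)`, so near the origin the
line `ℝ + iβ` is first moved back to `ℝ`; only the tail is estimated in absolute value. -/
theorem norm_integral_shifted_gaussian_mul_sub_le (hD : 0 < D) (hL : 0 ≤ L)
    (hβ : 2 * β ^ 2 ≤ L ^ 2) {G : ℂ → ℂ} {g : ℝ → ℂ} (hg : Continuous g)
    (hgM : ∀ s, ‖g s‖ ≤ M) (hG : DifferentiableOn ℂ G (uIcc (-L) L ×ℂ uIcc 0 β))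
    (hGδ : ∀ z ∈ uIcc (-L) L ×ℂ uIcc 0 β, ‖G z - 1‖ ≤ δ)
    (hgG : ∀ s ∈ Icc (-L) L, g s = G (s + β * I)) :
    ‖(∫ s : ℝ, cexp (-(D : ℂ) * (s + β * I) ^ 2) * g s) - (√(π / D) : ℂ)‖
      ≤ (3 * δ + 2 * (M + 1) * rexp (D * β ^ 2 - D * L ^ 2 / 2)) * √(π / D) := by
  set w : ℝ → ℂ := fun s => cexp (-(D : ℂ) * (s + β * I) ^ 2)
  have hw : Integrable w :=
    GaussianFourier.integrable_cexp_neg_mul_sq_add_real_mul_I (by simpa) β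
  have hwg : Integrable fun s => w s * g s :=
    hw.mul_bdd (c := M) hg.aestronglyMeasurable (Filter.Eventually.of_forall hgM)
  have hwg1 : Integrable fun s => w s * (g s - 1) := by
    simp only [mul_sub, mul_one]
    exact hwg.sub hw
  have hmiddle : ‖∫ s in Icc (-L) L, w s * (g s - 1)‖ ≤ 3 * δ * √(π / D) := by
    rw [setIntegral_congr_fun measurableSet_Icc
      fun s hs => by rw [hgG s hs], integral_Icc_eq_integral_Ioc,
      ← intervalIntegral.integral_of_le (neg_le_self hL)]
    exact norm_intervalIntegral_shifted_gaussian_smul_le hD hL hβ (hG.sub_const 1) hGδ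
  have htail : ‖∫ s in (Icc (-L) L)ᶜ, w s * (g s - 1)‖
      ≤ 2 * (M + 1) * rexp (D * β ^ 2 - D * L ^ 2 / 2) * √(π / D) :=
    norm_setIntegral_compl_shifted_gaussian_smul_le hD hL fun s =>
      (norm_sub_le _ _).trans (by simpa using hgM s)
  calc ‖(∫ s, w s * g s) - (√(π / D) : ℂ)‖
      = ‖(∫ s in Icc (-L) L, w s * (g s - 1)) + ∫ s in (Icc (-L) L)ᶜ, w s * (g s - 1)‖ := by
        rw [integral_add_compl measurableSet_Icc hwg1, ← integral_shifted_gaussian hD β,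
          ← integral_sub hwg hw]
        simp only [mul_sub, mul_one, w]
    _ ≤ _ := (norm_add_le _ _).trans (by linarith)

end ShiftedGaussian

section DerivativeBootstrap

open Set Metric

variable {f : ℂ → ℂ} {C γ A r : ℝ} {z₀ z : ℂ}

/- Along a segment from `z₀`, the bound `A + A t` cannot be crossed: at a crossing `Re f ≤ 2 A`, so
the derivative hypothesis gives the slope of `Re f` a bound smaller than `A`. -/
theorem re_le_two_mul_of_norm_deriv_le_rpow (hC : 0 ≤ C) (hγ : 0 ≤ γ) (hA : 1 ≤ A)
    (hf : ∀ z ∈ closedBall z₀ r, DifferentiableAt ℂ f z)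
    (hf' : ∀ z ∈ closedBall z₀ r, ‖deriv f z‖ ≤ C * (max 1 (f z).re) ^ γ)
    (h₀ : (f z₀).re ≤ A) (hr : C * (2 * A) ^ γ * r < A) (hz : z ∈ closedBall z₀ r) :
    (f z).re ≤ 2 * A := by
  set p : ℝ → ℂ := fun t => z₀ + t * (z - z₀) with hp
  have hzr : ‖z - z₀‖ ≤ r := mem_closedBall_iff_norm.1 hz
  have hmem : ∀ t ∈ Icc (0 : ℝ) 1, p t ∈ closedBall z₀ r := fun t ht => by
    simpa [hp] using (convex_closedBall z₀ r).add_smul_sub_mem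
      (mem_closedBall_self ((norm_nonneg _).trans hzr)) hz ht
  have hderiv : ∀ t ∈ Icc (0 : ℝ) 1,
      HasDerivAt (fun t => (f (p t)).re) (deriv f (p t) * (z - z₀)).re t := fun t ht => by
    have hline : HasDerivAt (fun w : ℂ => z₀ + w * (z - z₀)) (z - z₀) (t : ℂ) := by
      simpa using ((hasDerivAt_id (t : ℂ)).mul_const (z - z₀)).const_add z₀
    exact ((hf _ (hmem t ht)).hasDerivAt.comp (t : ℂ) hline).real_of_complex
  have hslope : ∀ t ∈ Ico (0 : ℝ) 1, (f (p t)).re = A + A * t →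
      (deriv f (p t) * (z - z₀)).re < A := fun t ht hcross => by
    have hmax : max 1 (f (p t)).re ≤ 2 * A := max_le (by linarith) (by nlinarith [ht.2])
    calc (deriv f (p t) * (z - z₀)).re ≤ ‖deriv f (p t)‖ * ‖z - z₀‖ :=
          (re_le_norm _).trans (norm_mul_le _ _)
      _ ≤ C * (2 * A) ^ γ * r := by
          gcongr
          exact (hf' _ (hmem t (Ico_subset_Icc_self ht))).trans (by gcongr)
      _ < A := hr
  have hfence := image_le_of_deriv_right_lt_deriv_boundary
    (fun t ht => (hderiv t ht).continuousAt.continuousWithinAt)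
    (fun t ht => (hderiv t (Ico_subset_Icc_self ht)).hasDerivWithinAt)
    (B := fun t => A + A * t) (by simpa [hp] using h₀)
    (fun t => by simpa using ((hasDerivAt_id t).const_mul A).const_add A)
    hslope (right_mem_Icc.2 zero_le_one)
  simp only [hp, ofReal_one, one_mul, add_sub_cancel, mul_one] at hfence
  linarith

theorem norm_deriv_le_of_norm_deriv_le_rpow (hC : 0 ≤ C) (hγ : 0 ≤ γ) (hA : 1 ≤ A)
    (hf : ∀ z ∈ closedBall z₀ r, DifferentiableAt ℂ f z)
    (hf' : ∀ z ∈ closedBall z₀ r, ‖deriv f z‖ ≤ C * (max 1 (f z).re) ^ γ)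
    (h₀ : (f z₀).re ≤ A) (hr : C * (2 * A) ^ γ * r < A) (hz : z ∈ closedBall z₀ r) :
    ‖deriv f z‖ ≤ C * (2 * A) ^ γ := by
  have hre := re_le_two_mul_of_norm_deriv_le_rpow hC hγ hA hf hf' h₀ hr hz
  have hmax : max 1 (f z).re ≤ 2 * A := max_le (by linarith) hre
  exact (hf' z hz).trans (by gcongr)

end DerivativeBootstrap

section ReExtension

/-- The analytic continuation `z ↦ (F z + conj (F (conj z))) / 2` of the restriction of `Re F` to
the real line. -/
noncomputable def reExtension (F : ℂ → ℂ) (z : ℂ) : ℂ :=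
  (F z + starRingEnd ℂ (F (starRingEnd ℂ z))) / 2

variable {F : ℂ → ℂ} {B : ℝ} {z w : ℂ}

theorem reExtension_ofReal (F : ℂ → ℂ) (x : ℝ) : reExtension F x = ((F x).re : ℂ) := by
  simp [reExtension, add_conj]

theorem differentiableAt_reExtension (hz : DifferentiableAt ℂ F z)
    (hz' : DifferentiableAt ℂ F (starRingEnd ℂ z)) : DifferentiableAt ℂ (reExtension F) z := by
  have hconj := hz'.conj_conj
  rw [conj_conj] at hconj
  exact (hz.add hconj).div_const 2

theorem norm_reExtension_sub_le (h : ‖F z - F w‖ ≤ B)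
    (h' : ‖F (starRingEnd ℂ z) - F (starRingEnd ℂ w)‖ ≤ B) :
    ‖reExtension F z - reExtension F w‖ ≤ B := by
  have hsub : reExtension F z - reExtension F w =
      ((F z - F w) + starRingEnd ℂ (F (starRingEnd ℂ z) - F (starRingEnd ℂ w))) / 2 := by
    simp only [reExtension, map_sub]
    ring
  have hadd := norm_add_le (F z - F w)
    (starRingEnd ℂ (F (starRingEnd ℂ z) - F (starRingEnd ℂ w)))
  rw [RCLike.norm_conj] at hadd
  rw [hsub, norm_div, Complex.norm_ofNat]
  linarith

end ReExtension

section SecondDerivative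

open Filter Topology

theorem two_mul_le_deriv_deriv_of_eventually_le {f : ℝ → ℝ} {k x : ℝ} (hf : Differentiable ℝ f)
    (hf' : DifferentiableAt ℝ (deriv f) x) (h : ∀ᶠ t in 𝓝 x, f x + k * (t - x) ^ 2 ≤ f t) :
    2 * k ≤ deriv (deriv f) x := by
  set g : ℝ → ℝ := fun t => f t - k * (t - x) ^ 2 with hg
  have hsq : ∀ t, HasDerivAt (fun t => k * (t - x) ^ 2) (2 * k * (t - x)) t := fun t =>
    ((((hasDerivAt_id t).sub_const x).pow 2).const_mul k).congr_deriv (by simp; ring)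
  have hg' : deriv g = fun t => deriv f t - 2 * k * (t - x) :=
    funext fun t => ((hf t).hasDerivAt.sub (hsq t)).deriv
  have hg'' : deriv (deriv g) x = deriv (deriv f) x - 2 * k := by
    rw [hg']
    exact (hf'.hasDerivAt.sub (((hasDerivAt_id x).sub_const x).const_mul (2 * k))).deriv.trans
      (by simp)
  have hmin : IsLocalMin g x := by
    filter_upwards [h] with t ht
    simp only [hg, sub_self]
    linarith
  by_contra! hlt
  have hneg : deriv (deriv g) x < 0 := by linarith
  have hmax : IsLocalMax g x := isLocalMax_of_deriv_deriv_neg hneg hmin.deriv_eq_zero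
    ((hf x).hasDerivAt.sub (hsq x)).continuousAt
  have hconst : g =ᶠ[𝓝 x] fun _ => g x := by
    filter_upwards [hmin, hmax] with t h₁ h₂ using le_antisymm h₂ h₁
  simp [hconst.deriv.deriv_eq] at hneg

theorem deriv_re {f : ℝ → ℂ} (hf : Differentiable ℝ f) :
    deriv (fun t => (f t).re) = fun t => (deriv f t).re :=
  funext fun t => (reCLM.hasFDerivAt.comp_hasDerivAt t (hf t).hasDerivAt).deriv

theorem deriv_deriv_comp_ofReal {F : ℂ → ℂ} {x : ℝ} (hF : AnalyticAt ℂ F x) :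
    deriv (deriv fun t : ℝ => F t) x = deriv (deriv F) x := by
  have hderiv : (deriv fun t : ℝ => F t) =ᶠ[𝓝 x] fun t : ℝ => deriv F t := by
    filter_upwards [continuous_ofReal.continuousAt.eventually hF.eventually_analyticAt] with t ht
    exact ht.differentiableAt.hasDerivAt.comp_ofReal.deriv
  rw [hderiv.deriv_eq]
  exact hF.deriv.differentiableAt.hasDerivAt.comp_ofReal.deriv

end SecondDerivative

theorem re_eq_re_mul_re_of_mul_im_eq_zero {u q : ℂ} (hu : ‖u‖ = 1) (huq : (u * q).im = 0) :
    q.re = (u * q).re * u.re := by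
  have hq : q = starRingEnd ℂ u * (u * q) := by
    rw [← mul_assoc, conj_mul', hu]
    simp
  rw [hq, mul_re, huq, ← hq, conj_re]
  ring

namespace UHyp

open Set Metric Filter Topology

variable {C c γ : ℝ} {ζ : ℂ} {U : ℝ → ℂ}

theorem norm_sq_eq_one (h : UHyp C c γ ζ U) : ‖ζ ^ 2‖ = 1 := by simp [h.hζ]

theorem re_nonneg (h : UHyp C c γ ζ U) (hC : 0 ≤ C) (x : ℝ) : 0 ≤ (U x).re :=
  le_trans (by positivity) (h.hU3 x)

theorem exists_extension_norm_deriv_le (h : UHyp C c γ ζ U) (hC : 0 ≤ C) (hγ : 0 ≤ γ) {A r x : ℝ}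
    (hA : 1 ≤ A) (hx : (U x).re ≤ A) (hrc : r ≤ c) (hr : C * (2 * A) ^ γ * r < A) :
    ∃ F : ℂ → ℂ, (∀ t : ℝ, F t = U t) ∧ AnalyticOnNhd ℂ F (closedBall x r) ∧
      (∀ z ∈ closedBall (x : ℂ) r, (F z).re ≤ 2 * A) ∧
      ∀ z ∈ closedBall (x : ℂ) r, ‖deriv F z‖ ≤ C * (2 * A) ^ γ := by
  obtain ⟨F, hFU, hF, hF'⟩ := h.hU4
  have hstrip : ∀ z ∈ closedBall (x : ℂ) r, |z.im| ≤ c := fun z hz => by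
    simpa using (abs_im_le_norm (z - x)).trans ((mem_closedBall_iff_norm.1 hz).trans hrc)
  have hdiff : ∀ z ∈ closedBall (x : ℂ) r, DifferentiableAt ℂ F z := fun z hz =>
    (hF z (hstrip z hz)).differentiableAt
  have hball' : ∀ z ∈ closedBall (x : ℂ) r, ‖deriv F z‖ ≤ C * (max 1 (F z).re) ^ γ := fun z hz =>
    hF' z (hstrip z hz)
  have hx' : (F x).re ≤ A := by rwa [hFU]
  exact ⟨F, hFU, fun z hz => hF z (hstrip z hz),
    fun z => re_le_two_mul_of_norm_deriv_le_rpow hC hγ hA hdiff hball' hx' hr,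
    fun z => norm_deriv_le_of_norm_deriv_le_rpow hC hγ hA hdiff hball' hx' hr⟩

theorem re_le_two_mul (h : UHyp C c γ ζ U) (hC : 0 ≤ C) (hγ : 0 ≤ γ) {A r x t : ℝ}
    (hA : 1 ≤ A) (hx : (U x).re ≤ A) (hrc : r ≤ c) (hr : C * (2 * A) ^ γ * r < A)
    (ht : |t - x| ≤ r) : (U t).re ≤ 2 * A := by
  obtain ⟨F, hFU, -, hre, -⟩ := h.exists_extension_norm_deriv_le hC hγ hA hx hrc hr
  rw [← hFU]
  refine hre t ?_
  rwa [mem_closedBall_iff_norm, ← ofReal_sub, norm_real]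

theorem exists_extension_re (h : UHyp C c γ ζ U) (hC : 0 ≤ C) (hγ : 0 ≤ γ) {A r x : ℝ}
    (hA : 1 ≤ A) (hx : (U x).re ≤ A) (hrc : r ≤ c) (hr : C * (2 * A) ^ γ * r < A) :
    ∃ V : ℂ → ℂ, (∀ t : ℝ, V t = ((U t).re : ℂ)) ∧
      (∀ z ∈ closedBall (x : ℂ) r, DifferentiableAt ℂ V z) ∧
      ∀ z ∈ closedBall (x : ℂ) r, ∀ w ∈ closedBall (x : ℂ) r,
        ‖V z - V w‖ ≤ C * (2 * A) ^ γ * ‖z - w‖ := by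
  obtain ⟨F, hFU, hF, -, hF'⟩ := h.exists_extension_norm_deriv_le hC hγ hA hx hrc hr
  have hconj : ∀ z ∈ closedBall (x : ℂ) r, starRingEnd ℂ z ∈ closedBall (x : ℂ) r := fun z hz => by
    rwa [mem_closedBall, ← conj_ofReal, dist_conj_conj]
  have hdiff : ∀ z ∈ closedBall (x : ℂ) r, DifferentiableAt ℂ F z := fun z hz =>
    (hF z hz).differentiableAt
  have hlip : ∀ z ∈ closedBall (x : ℂ) r, ∀ w ∈ closedBall (x : ℂ) r,
      ‖F z - F w‖ ≤ C * (2 * A) ^ γ * ‖z - w‖ := fun z hz w hw =>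
    (convex_closedBall _ _).norm_image_sub_le_of_norm_deriv_le hdiff hF' hw hz
  refine ⟨reExtension F, fun t => by rw [reExtension_ofReal, hFU],
    fun z hz => differentiableAt_reExtension (hdiff z hz) (hdiff _ (hconj z hz)),
    fun z hz w hw => norm_reExtension_sub_le (hlip z hz w hw) ?_⟩
  simpa only [← map_sub, RCLike.norm_conj] using hlip _ (hconj z hz) _ (hconj w hw)

theorem two_div_le_re_deriv_deriv (h : UHyp C c γ ζ U) : 2 / C ≤ (deriv (deriv U) 0).re := by
  have hU : Differentiable ℝ U := h.hU1smooth.differentiable (by simp)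
  have hU' : Differentiable ℝ (deriv U) :=
    (contDiff_infty_iff_deriv.1 h.hU1smooth).2.differentiable (by simp)
  have hquad : ∀ᶠ t : ℝ in 𝓝 0, (U 0).re + 1 / C * (t - 0) ^ 2 ≤ (U t).re := by
    filter_upwards [Ioo_mem_nhds (neg_lt_zero.2 one_pos) one_pos] with t ht
    have hle := h.hU3 t
    rw [min_eq_right (by nlinarith [ht.1, ht.2])] at hle
    simpa [h.hU1zero] using hle
  have hre' := deriv_re hU
  have hle := two_mul_le_deriv_deriv_of_eventually_le (f := fun t => (U t).re)
    (fun t => reCLM.differentiableAt.comp t (hU t))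
    (by rw [hre']; exact reCLM.differentiableAt.comp (0 : ℝ) (hU' 0)) hquad
  rw [hre', deriv_re hU'] at hle
  rwa [mul_one_div] at hle

theorem norm_deriv_deriv_le (h : UHyp C c γ ζ U) (hC : 0 ≤ C) (hγ : 0 ≤ γ) {r : ℝ} (hr : 0 < r)
    (hrc : r ≤ c) (hCr : C * 2 ^ γ * r < 1) : ‖deriv (deriv U) 0‖ ≤ C * 2 ^ γ / r := by
  obtain ⟨F, hFU, hF, -, hF'⟩ := h.exists_extension_norm_deriv_le (x := 0) hC hγ le_rfl
    (by simp [h.hU1zero]) hrc (by rwa [mul_one])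
  rw [← funext hFU, deriv_deriv_comp_ofReal (hF _ (mem_closedBall_self hr.le))]
  refine norm_deriv_le_of_forall_mem_sphere_norm_le hr
    (DifferentiableOn.diffContOnCl fun z hz => ?_) fun z hz => ?_
  · exact (hF z (closure_ball_subset_closedBall hz)).deriv.differentiableAt.differentiableWithinAt
  · simpa only [mul_one] using hF' z (sphere_subset_closedBall hz)

/- Since `ζ² U''(0)` is real, `Re U''(0) = ζ² U''(0) · Re ζ²`: the growth of `Re U` bounds the left
side below and the Cauchy estimate bounds `ζ² U''(0)` above. -/
theorem two_div_mul_div_le_re_sq (h : UHyp C c γ ζ U) (hC : 0 < C) (hγ : 0 ≤ γ) {r : ℝ}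
    (hr : 0 < r) (hrc : r ≤ c) (hCr : C * 2 ^ γ * r < 1) :
    2 / C * (r / (C * 2 ^ γ)) ≤ (ζ ^ 2).re := by
  set q := deriv (deriv U) 0
  have hζq : (ζ ^ 2 * q).re ≤ C * 2 ^ γ / r := by
    refine (re_le_norm _).trans ?_
    rw [norm_mul, h.norm_sq_eq_one, one_mul]
    exact h.norm_deriv_deriv_le hC.le hγ hr hrc hCr
  have hlower : 2 / C ≤ C * 2 ^ γ / r * (ζ ^ 2).re :=
    calc 2 / C ≤ q.re := h.two_div_le_re_deriv_deriv
      _ = (ζ ^ 2 * q).re * (ζ ^ 2).re :=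
        re_eq_re_mul_re_of_mul_im_eq_zero h.norm_sq_eq_one h.hU2im
      _ ≤ C * 2 ^ γ / r * (ζ ^ 2).re := mul_le_mul_of_nonneg_right hζq h.hζre.le
  calc 2 / C * (r / (C * 2 ^ γ))
      ≤ C * 2 ^ γ / r * (ζ ^ 2).re * (r / (C * 2 ^ γ)) := by gcongr
    _ = (ζ ^ 2).re := by field_simp

theorem exists_pos_le_re_sq (hC : 0 < C) (hc : 0 < c) (hγ : 0 ≤ γ) :
    ∃ a : ℝ, 0 < a ∧ ∀ (ζ : ℂ) (U : ℝ → ℂ), UHyp C c γ ζ U → a ≤ (ζ ^ 2).re := by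
  set r := min c (1 / (2 * (C * 2 ^ γ)))
  have hr : 0 < r := lt_min hc (by positivity)
  have hCr : C * 2 ^ γ * r < 1 :=
    calc C * 2 ^ γ * r ≤ C * 2 ^ γ * (1 / (2 * (C * 2 ^ γ))) := by
          gcongr
          exact min_le_right _ _
      _ = 1 / 2 := by field_simp
      _ < 1 := one_half_lt_one
  exact ⟨2 / C * (r / (C * 2 ^ γ)), by positivity,
    fun ζ U h => h.two_div_mul_div_le_re_sq hC hγ hr (min_le_left _ _) hCr⟩

end UHyp

section KernelIdentity

/-- The kernel `(K*K)(x,y)`. -/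
noncomputable def kerKstarK (W : ℝ) (ζ : ℂ) (U : ℝ → ℂ) (x y : ℝ) : ℂ :=
  ∫ r : ℝ, starRingEnd ℂ (kerK W ζ U r x) * kerK W ζ U r y

/-- The exponential factor of the leading term of `(K*K)(x,y)`. -/
noncomputable def kerKstarKExp (W : ℝ) (ζ : ℂ) (U : ℝ → ℂ) (x y : ℝ) : ℂ :=
  Complex.exp (-(starRingEnd ℂ (U x) + U y) / 2
    - (((U ((x + y)/2)).re : ℝ) : ℂ)
    - (((W^2 / (2 * (ζ^2).re) : ℝ) : ℂ)) * ((x : ℂ) - (y : ℂ))^2)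

/-- The leading term of `(K*K)(x,y)`. -/
noncomputable def kerKstarKLeading (W : ℝ) (ζ : ℂ) (U : ℝ → ℂ) (x y : ℝ) : ℂ :=
  (Real.sqrt (π / (2 * W^2 * (ζ^2).re)) : ℂ) * kerKstarKExp W ζ U x y

/-- The quadratic part of the exponent of `conj K(r,x) · K(r,y)` is stationary at the complex point
`r = (x + y) / 2 - i · saddleHeight ζ x y`. -/
noncomputable def saddleHeight (ζ : ℂ) (x y : ℝ) : ℝ := (ζ ^ 2).im / (ζ ^ 2).re * ((x - y) / 2)

/-- The factor of `(K*K)(x,y)` left after extracting `kerKstarKExp`: here `D = 2 W² Re ζ²`,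
`β = saddleHeight ζ x y`, and `r = m + s` with `m = (x + y) / 2`. -/
noncomputable def saddleIntegral (U : ℝ → ℂ) (D β m : ℝ) : ℂ :=
  ∫ s : ℝ, cexp (-(D : ℂ) * (s + β * I) ^ 2) * cexp (-(((U (s + m)).re : ℂ) - ((U m).re : ℂ)))

theorem conj_mul_sub_sq_add_mul_add_sq {u : ℂ} (hu : ‖u‖ = 1) (hre : u.re ≠ 0) (s d : ℝ) :
    starRingEnd ℂ u * (s - d : ℂ) ^ 2 + u * (s + d : ℂ) ^ 2 =
      ((2 * u.re : ℝ) : ℂ) * (s + ((u.im / u.re * d : ℝ) : ℂ) * I) ^ 2 +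
        ((2 / u.re * d ^ 2 : ℝ) : ℂ) := by
  have hsq : (u.re : ℂ) ^ 2 + (u.im : ℂ) ^ 2 = 1 := by
    rw [← ofReal_pow, ← ofReal_pow, ← ofReal_add, ← normSq_add_mul_I, re_add_im,
      normSq_eq_norm_sq, hu, one_pow, ofReal_one]
  have hre' : (u.re : ℂ) ≠ 0 := ofReal_ne_zero.2 hre
  have hu_eq : u = u.re + u.im * I := (re_add_im u).symm
  have hconj : starRingEnd ℂ u = u.re - u.im * I := Complex.ext (by simp) (by simp)
  generalize u.re = p, u.im = q at *
  rw [hconj, hu_eq]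
  push_cast
  field_simp
  linear_combination (2 * d ^ 2) * hsq - (2 * q ^ 2 * d ^ 2) * I_sq

variable {ζ : ℂ} (W : ℝ) (U : ℝ → ℂ)

theorem conj_kerK_mul_kerK (hζ : ‖ζ ^ 2‖ = 1) (hζre : (ζ ^ 2).re ≠ 0) (x y s : ℝ) :
    starRingEnd ℂ (kerK W ζ U (s + (x + y) / 2) x) * kerK W ζ U (s + (x + y) / 2) y =
      kerKstarKExp W ζ U x y *
        (cexp (-((2 * W ^ 2 * (ζ ^ 2).re : ℝ) : ℂ) * (s + saddleHeight ζ x y * I) ^ 2) *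
          cexp (-(((U (s + (x + y) / 2)).re : ℂ) - ((U ((x + y) / 2)).re : ℂ)))) := by
  have hquad := conj_mul_sub_sq_add_mul_add_sq hζ hζre s ((x - y) / 2)
  have hU := add_conj (U (s + (x + y) / 2))
  rw [map_pow] at hquad
  simp only [kerK, kerKstarKExp, saddleHeight, ← exp_conj, ← Complex.exp_add, map_sub, map_mul,
    map_neg, map_pow, map_div₀, conj_ofReal, map_ofNat]
  congr 1
  push_cast at hquad hU ⊢
  linear_combination -(W : ℂ) ^ 2 * hquad - (1 / 2) * hU

theorem kerKstarK_eq_mul_saddleIntegral (hζ : ‖ζ ^ 2‖ = 1) (hζre : (ζ ^ 2).re ≠ 0) (x y : ℝ) :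
    kerKstarK W ζ U x y = kerKstarKExp W ζ U x y *
      saddleIntegral U (2 * W ^ 2 * (ζ ^ 2).re) (saddleHeight ζ x y) ((x + y) / 2) := by
  rw [kerKstarK, saddleIntegral, ← integral_add_right_eq_self _ ((x + y) / 2),
    ← integral_const_mul]
  exact integral_congr_ae (.of_forall fun s => conj_kerK_mul_kerK W U hζ hζre x y s)

theorem abs_saddleHeight_le (hζ : ‖ζ ^ 2‖ = 1) (x y : ℝ) :
    |saddleHeight ζ x y| ≤ |x - y| / (2 * |(ζ ^ 2).re|) := by
  have him : |(ζ ^ 2).im| ≤ 1 := hζ ▸ abs_im_le_norm (ζ ^ 2)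
  calc |saddleHeight ζ x y| = |(ζ ^ 2).im| * (|x - y| / (2 * |(ζ ^ 2).re|)) := by
        rw [saddleHeight, abs_mul, abs_div, abs_div, abs_two]
        ring
    _ ≤ 1 * (|x - y| / (2 * |(ζ ^ 2).re|)) := by gcongr
    _ = |x - y| / (2 * |(ζ ^ 2).re|) := one_mul _

variable {W U} in
theorem exists_kerKstarK_eq_of_norm_saddleIntegral_sub_le {ε : ℝ} (hζ : ‖ζ ^ 2‖ = 1)
    (hζre : 0 < (ζ ^ 2).re) (hW : W ≠ 0) (x y : ℝ)
    (hε : ‖saddleIntegral U (2 * W ^ 2 * (ζ ^ 2).re) (saddleHeight ζ x y) ((x + y) / 2) -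
      (√(π / (2 * W ^ 2 * (ζ ^ 2).re)) : ℂ)‖ ≤ ε * √(π / (2 * W ^ 2 * (ζ ^ 2).re))) :
    ∃ R : ℂ, kerKstarK W ζ U x y = (1 + R) * kerKstarKLeading W ζ U x y ∧ ‖R‖ ≤ ε := by
  rw [kerKstarK_eq_mul_saddleIntegral W U hζ hζre.ne', kerKstarKLeading]
  set S := √(π / (2 * W ^ 2 * (ζ ^ 2).re))
  set J := saddleIntegral U (2 * W ^ 2 * (ζ ^ 2).re) (saddleHeight ζ x y) ((x + y) / 2)
  have hS : 0 < S := Real.sqrt_pos.2 (by positivity)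
  have hS' : (S : ℂ) ≠ 0 := ofReal_ne_zero.2 hS.ne'
  refine ⟨(J - S) / S, ?_, ?_⟩
  · field_simp
    ring
  · rw [norm_div, Complex.norm_of_nonneg hS.le]
    exact (div_le_iff₀ hS).2 hε

end KernelIdentity

section KernelEstimate

open Set Metric

theorem sub_mul_I_add_mem_closedBall {L β m : ℝ} {z : ℂ} (hβ : |β| ≤ L)
    (hz : z ∈ uIcc (-L) L ×ℂ uIcc 0 β) : (m : ℂ) - β * I + z ∈ closedBall (m : ℂ) (2 * L) := by
  have hL : 0 ≤ L := (abs_nonneg β).trans hβ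
  obtain ⟨hre, him⟩ := mem_reProdIm.1 hz
  rw [uIcc_of_le (neg_le_self hL)] at hre
  have him' : |z.im - β| ≤ L := by
    rw [abs_sub_comm]
    exact (abs_sub_right_of_mem_uIcc him).trans (by rwa [sub_zero])
  have hsub : (m : ℂ) - β * I + z - m = z - β * I := by ring
  rw [mem_closedBall_iff_norm, hsub]
  refine (norm_le_abs_re_add_abs_im _).trans ?_
  simpa [two_mul] using add_le_add (abs_le.2 hre) him'

namespace UHyp

variable {C c γ : ℝ} {ζ : ℂ} {U : ℝ → ℂ}

theorem norm_saddleIntegral_sub_le (h : UHyp C c γ ζ U) (hC : 0 ≤ C) (hγ : 0 ≤ γ)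
    {A D L β m : ℝ} (hA : 1 ≤ A) (hm : (U m).re ≤ A) (hD : 0 < D) (hL : 0 ≤ L)
    (hβ : 2 * β ^ 2 ≤ L ^ 2) (hLc : 2 * L ≤ c) (hAL : C * (2 * A) ^ γ * (2 * L) < 1) :
    ‖saddleIntegral U D β m - (√(π / D) : ℂ)‖ ≤
      (12 * (C * (2 * A) ^ γ * L) + 4 * rexp (A + D * β ^ 2 - D * L ^ 2 / 2)) * √(π / D) := by
  obtain ⟨V, hVU, hV, hVlip⟩ := h.exists_extension_re hC hγ hA hm hLc (by linarith)
  have hβL : |β| ≤ L := abs_le_of_sq_le_sq (by nlinarith [sq_nonneg β]) hL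
  have hmem : ∀ z ∈ uIcc (-L) L ×ℂ uIcc 0 β, (m : ℂ) - β * I + z ∈ closedBall (m : ℂ) (2 * L) :=
    fun z hz => sub_mul_I_add_mem_closedBall hβL hz
  have hVle : ∀ z ∈ uIcc (-L) L ×ℂ uIcc 0 β,
      ‖V (m - β * I + z) - V m‖ ≤ C * (2 * A) ^ γ * (2 * L) := fun z hz =>
    (hVlip _ (hmem z hz) _ (mem_closedBall_self (by linarith))).trans (by
      gcongr
      exact mem_closedBall_iff_norm.1 (hmem z hz))
  have hU : Continuous U := h.hU1smooth.continuous
  refine (norm_integral_shifted_gaussian_mul_sub_le (M := rexp A)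
    (δ := 2 * (C * (2 * A) ^ γ * (2 * L)))
    (G := fun z => cexp (-(V (m - β * I + z) - V m))) hD hL hβ
    (g := fun s => cexp (-(((U (s + m)).re : ℂ) - ((U m).re : ℂ)))) (by fun_prop) (fun s => ?_)
    (fun z hz => ?_) (fun z hz => ?_) fun s _ => ?_).trans ?_
  · rw [norm_exp, ← ofReal_sub, ← ofReal_neg, ofReal_re]
    gcongr
    linarith [h.re_nonneg hC (s + m)]
  · have hVz := (hV _ (hmem z hz)).comp z (differentiableAt_id.const_add ((m : ℂ) - β * I))
    exact (hVz.sub_const (V m)).neg.cexp.differentiableWithinAt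
  · refine (norm_exp_sub_one_le ?_).trans ?_ <;> rw [norm_neg]
    · linarith [hVle z hz]
    · gcongr
      exact hVle z hz
  · rw [← hVU, ← hVU]
    congr 4
    push_cast
    ring
  · gcongr ?_ * _
    rw [add_sub_assoc, Real.exp_add]
    nlinarith [Real.one_le_exp (zero_le_one.trans hA), Real.exp_pos (D * β ^ 2 - D * L ^ 2 / 2)]

theorem exists_kerKstarK_eq_of_re_midpoint_le (h : UHyp C c γ ζ U) (hC : 0 ≤ C) (hγ : 0 ≤ γ)
    {a A L W x y : ℝ} (ha : 0 < a) (haζ : a ≤ (ζ ^ 2).re) (hW : 0 < W) (hA : 1 ≤ A)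
    (hxy : |x - y| ≤ A / W) (hm : (U ((x + y) / 2)).re ≤ A) (hL : L = 2 * A / (a * W))
    (hLc : 2 * L ≤ c) (hAL : C * (2 * A) ^ γ * (2 * L) < 1) :
    ∃ R : ℂ, kerKstarK W ζ U x y = (1 + R) * kerKstarKLeading W ζ U x y ∧
      ‖R‖ ≤ 12 * (C * (2 * A) ^ γ * L) + 4 * rexp (-A) := by
  have hζre : 0 < (ζ ^ 2).re := h.hζre
  have ha1 : a ≤ 1 := haζ.trans ((re_le_norm _).trans h.norm_sq_eq_one.le)
  have hL0 : 0 < L := by rw [hL]; positivity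
  set D := 2 * W ^ 2 * (ζ ^ 2).re with hD_def
  set β := saddleHeight ζ x y
  have hD : 0 < D := by positivity
  have hβ : |β| ≤ L / 4 :=
    calc |β| ≤ |x - y| / (2 * |(ζ ^ 2).re|) := abs_saddleHeight_le h.norm_sq_eq_one x y
      _ ≤ A / W / (2 * a) := by
        rw [abs_of_pos hζre]
        gcongr
      _ = L / 4 := by
        rw [hL]
        field_simp
        norm_num
  have hβL : 16 * β ^ 2 ≤ L ^ 2 := by
    rw [← sq_abs β]
    nlinarith [abs_nonneg β]
  have hDL : 8 * A ≤ D * L ^ 2 :=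
    calc 8 * A ≤ 2 * W ^ 2 * a * L ^ 2 := by
          rw [hL]
          field_simp
          nlinarith
      _ ≤ D * L ^ 2 := by
          rw [hD_def]
          gcongr
  have hexp : A + D * β ^ 2 - D * L ^ 2 / 2 ≤ -A := by
    nlinarith [mul_le_mul_of_nonneg_left hβL hD.le]
  refine exists_kerKstarK_eq_of_norm_saddleIntegral_sub_le h.norm_sq_eq_one hζre hW.ne' x y
    ((h.norm_saddleIntegral_sub_le hC hγ hA hm hD hL0.le (by nlinarith) hLc hAL).trans ?_)
  gcongr

theorem exists_kerKstarK_eq (h : UHyp C c γ ζ U) (hC : 0 ≤ C) (hγ : 0 ≤ γ) {a A L W x y : ℝ}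
    (ha : 0 < a) (haζ : a ≤ (ζ ^ 2).re) (hW : 0 < W) (hA : 1 ≤ A) (hxy : |x - y| ≤ A / W)
    (hx : (U x).re ≤ A) (hL : L = 4 * A / (a * W)) (hLc : 2 * L ≤ c)
    (hAL : C * (4 * A) ^ γ * (2 * L) < 1) :
    ∃ R : ℂ, kerKstarK W ζ U x y = (1 + R) * kerKstarKLeading W ζ U x y ∧
      ‖R‖ ≤ 12 * (C * (4 * A) ^ γ * L) + 4 * rexp (-A) := by
  have ha1 : a ≤ 1 := haζ.trans ((re_le_norm _).trans h.norm_sq_eq_one.le)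
  have hAW : A / W ≤ L := by
    rw [hL]
    gcongr <;> nlinarith
  have hmx : |(x + y) / 2 - x| ≤ 2 * L := by
    rw [abs_le] at *
    constructor <;> linarith [hxy.1, hxy.2]
  have hL0 : 0 ≤ L := le_trans (by positivity) hAW
  have hAA : 2 * (2 * A) = 4 * A := by ring
  have hCr : C * (2 * A) ^ γ * (2 * L) < A :=
    calc C * (2 * A) ^ γ * (2 * L) ≤ C * (4 * A) ^ γ * (2 * L) := by
          gcongr
          norm_num
      _ < A := hAL.trans_le hA
  have hm : (U ((x + y) / 2)).re ≤ 2 * A := h.re_le_two_mul hC hγ hA hx hLc hCr hmx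
  obtain ⟨R, hR, hRle⟩ := h.exists_kerKstarK_eq_of_re_midpoint_le hC hγ ha haζ hW (A := 2 * A)
    (L := L) (by linarith) (hxy.trans (by gcongr; linarith)) hm (by rw [hL]; ring) hLc
    (by rwa [hAA])
  refine ⟨R, hR, hRle.trans ?_⟩
  rw [hAA]
  gcongr
  linarith

end UHyp

end KernelEstimate

section Asymptotics

open Filter Topology Asymptotics

theorem isLittleO_exp_neg_rpow_rpow_atTop {η : ℝ} (hη : 0 < η) (b : ℝ) :
    (fun W : ℝ => rexp (-W ^ η)) =o[atTop] fun W => W ^ b := by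
  have h := (isLittleO_exp_neg_mul_rpow_atTop one_pos (b / η)).comp_tendsto
    (tendsto_rpow_atTop hη)
  refine h.congr' ?_ ?_
  · exact .of_forall fun W => by rw [Function.comp_apply, neg_one_mul]
  · filter_upwards [eventually_ge_atTop 0] with W hW
    rw [Function.comp_apply, ← Real.rpow_mul hW, mul_div_cancel₀ _ hη.ne']

theorem four_mul_rpow_rpow_mul_eq {W : ℝ} (hW : 0 < W) (C γ η a : ℝ) :
    C * (4 * W ^ η) ^ γ * (4 * W ^ η / (a * W)) =
      4 * C * 4 ^ γ / a * W ^ (-1 + (1 + γ) * η) := by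
  rw [Real.mul_rpow (by norm_num) (by positivity), ← Real.rpow_mul hW.le,
    show -1 + (1 + γ) * η = -1 + η + η * γ by ring, Real.rpow_add hW, Real.rpow_add hW,
    Real.rpow_neg_one]
  field_simp

theorem stmt_18_general {C c γ η : ℝ} (hC : 0 < C) (hc : 0 < c) (hγ : 0 ≤ γ) (hη : 0 < η)
    (hηγ : (1 + γ) * η < 1) :
    ∃ C' : ℝ, 0 < C' ∧ ∀ᶠ W : ℝ in atTop, ∀ (ζ : ℂ) (U : ℝ → ℂ), UHyp C c γ ζ U →
      ∀ x y : ℝ, |x - y| ≤ W ^ (-1 + η) → (U x).re ≤ W ^ η →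
        ∃ R : ℂ, kerKstarK W ζ U x y = (1 + R) * kerKstarKLeading W ζ U x y ∧
          ‖R‖ ≤ C' * W ^ (-1 + (1 + γ) * η) := by
  obtain ⟨a, ha, haζ⟩ := UHyp.exists_pos_le_re_sq hC hc hγ
  refine ⟨48 * C * 4 ^ γ / a + 1, by positivity, ?_⟩
  have hη1 : -1 + η < 0 := by nlinarith
  have htends (k b : ℝ) (hb : b < 0) :
      Tendsto (fun W : ℝ => k * W ^ b) atTop (𝓝 0) := by
    simpa using (tendsto_rpow_neg_atTop (neg_pos.2 hb)).const_mul k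
  filter_upwards [eventually_ge_atTop 1,
    (htends (8 / a) _ hη1).eventually_le_const hc,
    (htends (8 * C * 4 ^ γ / a) (-1 + (1 + γ) * η) (by linarith)).eventually_lt_const one_pos,
    (isLittleO_exp_neg_rpow_rpow_atTop hη (-1 + (1 + γ) * η)).bound (c := 1 / 4) (by norm_num)]
    with W hW1 hLc hAL hexp ζ U h x y hxy hx
  have hW : 0 < W := one_pos.trans_le hW1
  have hrpow : W ^ (-1 + η) = W ^ η / W := by
    rw [Real.rpow_add hW, Real.rpow_neg_one]
    ring
  have hq := four_mul_rpow_rpow_mul_eq hW C γ η a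
  obtain ⟨R, hR, hRle⟩ := h.exists_kerKstarK_eq hC.le hγ ha (haζ ζ U h) hW
    (Real.one_le_rpow hW1 hη.le) (hxy.trans_eq hrpow) hx rfl
    (le_of_eq_of_le (by rw [hrpow]; ring) hLc)
    (lt_of_eq_of_lt (by linear_combination 2 * hq) hAL)
  refine ⟨R, hR, hRle.trans ?_⟩
  rw [hq]
  rw [Real.norm_of_nonneg (by positivity), Real.norm_of_nonneg (by positivity)] at hexp
  linear_combination 4 * hexp

end Asymptotics

/-- in the regime `|x−y| ≤ W^{−1+η}`, `Re U(x), Re U(y) ≤ W^η`, the kernel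
of `K*K` equals `(1 + O(W^{−1+5ηγ}))·√(π/(2W²Re ζ²))·
exp(−(conj U(x)+U(y))/2 − Re U((x+y)/2) − (W²/(2Re ζ²))(x−y)²)`. -/
theorem stmt_18 :
    ∀ (C c γ : ℝ), 1 ≤ C → 0 < c → 1 < γ →
    ∃ η₀ : ℝ, 0 < η₀ ∧
    ∀ η : ℝ, 0 < η → η ≤ η₀ →
    ∃ C' : ℝ, 0 < C' ∧ ∃ W₀ : ℝ, 0 < W₀ ∧
    ∀ (ζ : ℂ) (U : ℝ → ℂ), UHyp C c γ ζ U →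
    ∀ W : ℝ, W₀ ≤ W →
    ∀ x y : ℝ, |x - y| ≤ W ^ (-1 + η) → (U x).re ≤ W ^ η → (U y).re ≤ W ^ η →
    ∃ R : ℂ,
      (∫ r : ℝ, starRingEnd ℂ (kerK W ζ U r x) * kerK W ζ U r y) =
        (1 + R) * ((Real.sqrt (π / (2 * W^2 * (ζ^2).re)) : ℂ) *
          Complex.exp (-(starRingEnd ℂ (U x) + U y) / 2
            - (((U ((x + y)/2)).re : ℝ) : ℂ)
            - (((W^2 / (2 * (ζ^2).re) : ℝ) : ℂ)) * ((x : ℂ) - (y : ℂ))^2)) ∧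
      ‖R‖ ≤ C' * W ^ (-1 + 5*η*γ) := by
  intro C c γ hC hc hγ
  refine ⟨1 / (2 * (1 + γ)), by positivity, fun η hη hηη₀ => ?_⟩
  have hηγ : (1 + γ) * η < 1 := by
    rw [le_div_iff₀ (by positivity)] at hηη₀
    linarith
  obtain ⟨C', hC', hlarge⟩ :=
    stmt_18_general (zero_lt_one.trans_le hC) hc (zero_lt_one.trans hγ).le hη hηγ
  obtain ⟨W₀, hW₀⟩ := Filter.eventually_atTop.1 (hlarge.and (Filter.eventually_ge_atTop 1))
  refine ⟨C', hC', W₀, zero_lt_one.trans_le (hW₀ W₀ le_rfl).2,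
    fun ζ U hU W hW x y hxy hx _ => ?_⟩
  obtain ⟨hlargeW, hW1⟩ := hW₀ W hW
  obtain ⟨R, hR, hRle⟩ := hlargeW ζ U hU x y hxy hx
  refine ⟨R, hR, hRle.trans ?_⟩
  have hexponent : -1 + (1 + γ) * η ≤ -1 + 5 * η * γ := by nlinarith [mul_pos hη (sub_pos.2 hγ)]
  gcongr
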